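/- For |q|<1, H(q)^4·G(q^2)^2 − G(q)^4·H(q^2)^2 + G(q)^2·H(q)^2·G(q^2)·H(q^2) = G(q^2)^3·H(q^2)^3 / (G(q)^2·H(q)^2). -/

import Mathlib

/-!
Writing `a i = (q^i, q^(10-i); q^10)_∞` and `b = (q^5; q^10)_∞`, one has `G(q) = 1/(a₁a₄)`,
`H(q) = 1/(a₂a₃)`, `G(q²) = 1/a₂`, `H(q²) = 1/a₄`, and the claim is equivalent to
`a₁⁴a₄⁶ - a₂⁶a₃⁴ + a₁²a₄³a₂³a₃² = a₁⁶a₃⁶a₂⁵a₄⁵`. It follows algebraically from three relations.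

* The two relations `b²a₂²a₃ = a₁a₄(a₃a₄ + q a₁a₂)` and `b²a₁a₄² = a₂a₃(a₃a₄ - q a₁a₂)` come from
  `schroeter_pos` and `schroeter_neg`, in which a product of two theta series of base `q^5` is split
  by the parity of the sum of the indices. They give `a₂³a₃²` and `a₁²a₄³` as multiples of
  `a₃a₄ ± q a₁a₂`, hence `b⁴` times the difference of their squares is a monomial.
* The relation `a₁⁴a₂²a₃⁴a₄²b⁴ = b⁴ - 4q a₁a₃` is `φ(-q)² - φ(-q⁵)² = -4q f(-q,-q⁹) f(-q³,-q⁷)`,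
  where `φ(q) = ∑ q^(n²)` and `f` is Ramanujan's theta function. In `phi_sq_sub` it is obtained by
  writing `φ(-q)²` as a sum over the Gaussian integers and splitting it along the five cosets of the
  ideal `(2 + i)`: the ideal itself gives `φ(-q⁵)²`, and multiplication by `i` permutes the other
  four.

The passage between series and products is the Jacobi triple product `jtp`, proved from its finite
form `finite_jtp` by dominated convergence.
-/

noncomputable def qp (a q : ℂ) : ℂ := ∏' k : ℕ, (1 - a * q ^ k)

noncomputable def GG (q : ℂ) : ℂ := 1 / (qp q (q ^ 5) * qp (q ^ 4) (q ^ 5))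

noncomputable def HH (q : ℂ) : ℂ := 1 / (qp (q ^ 2) (q ^ 5) * qp (q ^ 3) (q ^ 5))

noncomputable def RR (q : ℂ) : ℂ :=
  (qp q (q ^ 5) * qp (q ^ 4) (q ^ 5)) / (qp (q ^ 2) (q ^ 5) * qp (q ^ 3) (q ^ 5))

noncomputable def phi (q : ℂ) : ℂ := ∑' n : ℤ, q ^ (n.natAbs ^ 2)

noncomputable def psi (q : ℂ) : ℂ := ∑' n : ℕ, q ^ (n * (n + 1) / 2)

open Filter Topology

/-! ### The infinite products -/

lemma qp_multipliable (a : ℂ) {p : ℂ} (hp : ‖p‖ < 1) :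
    Multipliable fun k : ℕ => 1 - a * p ^ k := by
  simp_rw [sub_eq_add_neg]
  apply multipliable_one_add_of_summable
  simpa using (summable_geometric_of_lt_one (norm_nonneg _) hp).mul_left ‖a‖

lemma qp_tendsto (a : ℂ) {p : ℂ} (hp : ‖p‖ < 1) :
    Tendsto (fun n => ∏ k ∈ Finset.range n, (1 - a * p ^ k)) atTop (𝓝 (qp a p)) :=
  (qp_multipliable a hp).tendsto_prod_tprod_nat

lemma one_sub_ne_zero_of_norm {x : ℂ} (hx : ‖x‖ < 1) : 1 - x ≠ 0 := by
  intro h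
  have : x = 1 := by linear_combination -h
  simp [this] at hx

lemma norm_mul_pow_lt {a p : ℂ} (ha : ‖a‖ < 1) (hp : ‖p‖ < 1) (k : ℕ) : ‖a * p ^ k‖ < 1 := by
  rw [norm_mul, norm_pow]
  calc ‖a‖ * ‖p‖ ^ k ≤ ‖a‖ * 1 := by
        gcongr
        exact pow_le_one₀ (norm_nonneg _) hp.le
    _ < 1 := by simpa using ha

lemma qp_ne_zero {a p : ℂ} (ha : ‖a‖ < 1) (hp : ‖p‖ < 1) : qp a p ≠ 0 := by
  unfold qp
  simp_rw [sub_eq_add_neg]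
  apply tprod_one_add_ne_zero_of_summable
  · intro k
    rw [← sub_eq_add_neg]
    exact one_sub_ne_zero_of_norm (norm_mul_pow_lt ha hp k)
  · simpa using (summable_geometric_of_lt_one (norm_nonneg _) hp).mul_left ‖a‖

lemma norm_pow_lt {p : ℂ} (hp : ‖p‖ < 1) {m : ℕ} (hm : m ≠ 0) : ‖p ^ m‖ < 1 := by
  rw [norm_pow]
  exact pow_lt_one₀ (norm_nonneg _) hp hm

/-- Sorting the factors of `(a; p)_∞` by the residue of the index modulo `m`. -/
lemma qp_dissect (a : ℂ) {p : ℂ} (hp : ‖p‖ < 1) {m : ℕ} (hm : m ≠ 0) :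
    qp a p = ∏ i ∈ Finset.range m, qp (a * p ^ i) (p ^ m) := by
  have h1 := (qp_tendsto a hp).comp (tendsto_id.const_mul_atTop' (Nat.pos_of_ne_zero hm))
  have h2 := tendsto_finsetProd (Finset.range m)
    fun i _ => qp_tendsto (a * p ^ i) (norm_pow_lt hp hm)
  refine tendsto_nhds_unique (h1.congr fun n => ?_) h2
  simp only [Function.comp, id]
  induction n with
  | zero => simp
  | succ n ih =>
    rw [Nat.mul_succ, Finset.prod_range_add, ih, ← Finset.prod_mul_distrib]
    refine Finset.prod_congr rfl fun i _ => ?_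
    rw [Finset.prod_range_succ]
    ring

/-- `(a; p)_∞ (-a; p)_∞ = (a²; p²)_∞`. -/
lemma qp_mul_qp_neg (a : ℂ) {p : ℂ} (hp : ‖p‖ < 1) :
    qp a p * qp (-a) p = qp (a ^ 2) (p ^ 2) := by
  refine tendsto_nhds_unique (((qp_tendsto a hp).mul (qp_tendsto (-a) hp)).congr fun n => ?_)
    (qp_tendsto (a ^ 2) (norm_pow_lt hp two_ne_zero))
  rw [← Finset.prod_mul_distrib]
  exact Finset.prod_congr rfl fun i _ => by ring

/-! ### The Jacobi triple product -/

/-- The finite product `(p; p)_n`. -/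
noncomputable def fp (p : ℂ) (n : ℕ) : ℂ := ∏ k ∈ Finset.range n, (1 - p * p ^ k)

/-- The reciprocal `1 / (p; p)_m`, extended by zero to negative `m`; with this convention the
recurrence `rp_sub_one` holds for every integer. -/
noncomputable def rp (p : ℂ) (m : ℤ) : ℂ := if 0 ≤ m then (fp p m.toNat)⁻¹ else 0

lemma fp_ne_zero {p : ℂ} (hp : ‖p‖ < 1) (n : ℕ) : fp p n ≠ 0 :=
  Finset.prod_ne_zero_iff.2 fun k _ => one_sub_ne_zero_of_norm (norm_mul_pow_lt hp hp k)

lemma rp_sub_one {p : ℂ} (hp : ‖p‖ < 1) (m : ℤ) : rp p (m - 1) = (1 - p ^ m) * rp p m := by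
  rcases lt_trichotomy m 0 with h | rfl | h
  · rw [rp, rp, if_neg (by omega), if_neg (by omega), mul_zero]
  · simp [rp]
  · obtain ⟨n, rfl⟩ : ∃ n : ℕ, m = n + 1 := ⟨(m - 1).toNat, by omega⟩
    have h1 := fp_ne_zero hp (n + 1)
    have h2 := fp_ne_zero hp n
    have h3 : fp p (n + 1) = fp p n * (1 - p ^ (n + 1)) := by
      rw [fp, Finset.prod_range_succ, ← fp, pow_succ' p n]
    have h4 : ((n : ℤ) + 1).toNat = n + 1 := by omega
    have h5 : p ^ ((n : ℤ) + 1) = p ^ (n + 1) := by exact_mod_cast zpow_natCast p (n + 1)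
    rw [rp, rp, if_pos (by omega), if_pos (by omega), h4, h5]
    simp only [add_sub_cancel_right, Int.toNat_natCast]
    field_simp
    rw [h3]

lemma rp_bounded {p : ℂ} (hp : ‖p‖ < 1) : ∃ C, ∀ m, ‖rp p m‖ ≤ C := by
  have h : Tendsto (fun n => (fp p n)⁻¹) atTop (𝓝 (qp p p)⁻¹) :=
    (qp_tendsto p hp).inv₀ (qp_ne_zero hp hp)
  obtain ⟨C, hC⟩ := (Metric.isBounded_range_of_tendsto _ h).exists_norm_le
  refine ⟨C, fun m => ?_⟩
  have h0 : 0 ≤ C := (norm_nonneg _).trans (hC _ ⟨0, rfl⟩)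
  unfold rp
  split_ifs
  · exact hC _ ⟨_, rfl⟩
  · simpa using h0

/-- The general term `(-1)^j p^{j(j-1)/2} z^j` of the theta series. The integer division is exact, since
`j (j - 1)` is even. -/
noncomputable def tt (p z : ℂ) (j : ℤ) : ℂ := (-1) ^ j * p ^ (j * (j - 1) / 2) * z ^ j

lemma tri_succ (j : ℤ) : (j + 1) * (j + 1 - 1) / 2 = j * (j - 1) / 2 + j := by
  rw [show (j + 1) * (j + 1 - 1) = j * (j - 1) + j * 2 by ring, Int.add_mul_ediv_right _ _ two_ne_zero]

lemma tt_succ {p z : ℂ} (hp : p ≠ 0) (hz : z ≠ 0) (j : ℤ) :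
    tt p z (j + 1) = -(z * p ^ j) * tt p z j := by
  rw [tt, tt, tri_succ, zpow_add₀ hp, zpow_add_one₀ hz, zpow_add_one₀ (by norm_num)]
  ring

lemma tt_neg {p z : ℂ} (hp : p ≠ 0) (j : ℤ) : tt p z (-j) = tt p (p / z) j := by
  have h : -j * (-j - 1) / 2 = j * (j - 1) / 2 + j := by
    rw [← tri_succ]; congr 1; ring
  rw [tt, tt, h, zpow_add₀ hp, div_zpow, zpow_neg, zpow_neg, ← inv_zpow, div_eq_mul_inv]
  norm_num
  ring

lemma tt_ne_zero {p z : ℂ} (hp : p ≠ 0) (hz : z ≠ 0) (j : ℤ) : tt p z j ≠ 0 := by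
  unfold tt
  have := zpow_ne_zero j (show (-1 : ℂ) ≠ 0 by norm_num)
  have := zpow_ne_zero (j * (j - 1) / 2) hp
  have := zpow_ne_zero j hz
  positivity

lemma tt_summable_nat {p z : ℂ} (hp : p ≠ 0) (hz : z ≠ 0) (hp1 : ‖p‖ < 1) :
    Summable fun n : ℕ => ‖tt p z n‖ := by
  apply summable_of_ratio_test_tendsto_lt_one zero_lt_one
    (.of_forall fun n => norm_ne_zero_iff.2 (tt_ne_zero hp hz _))
  have h : Tendsto (fun n : ℕ => ‖z‖ * ‖p‖ ^ n) atTop (𝓝 (‖z‖ * 0)) :=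
    (tendsto_pow_atTop_nhds_zero_of_lt_one (norm_nonneg _) hp1).const_mul _
  rw [mul_zero] at h
  refine h.congr fun n => ?_
  have := norm_ne_zero_iff.2 (tt_ne_zero hp hz n)
  rw [Nat.cast_succ, tt_succ hp hz]
  simp only [norm_mul, norm_neg, norm_norm, zpow_natCast, norm_pow]
  field_simp

lemma tt_summable {p z : ℂ} (hp : p ≠ 0) (hz : z ≠ 0) (hp1 : ‖p‖ < 1) :
    Summable fun n : ℤ => ‖tt p z n‖ := by
  refine .of_nat_of_neg (tt_summable_nat hp hz hp1) ?_
  simp_rw [tt_neg hp]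
  exact tt_summable_nat hp (div_ne_zero hp hz) hp1

/-- Finite form of the Jacobi triple product, the coefficients being Gaussian binomials. -/
lemma finite_jtp {p z : ℂ} (hp : p ≠ 0) (hz : z ≠ 0) (hp1 : ‖p‖ < 1) (n : ℕ) :
    HasSum (fun j : ℤ => fp p (2 * n) * rp p (n + j) * rp p (n - j) * tt p z j)
      ((∏ k ∈ Finset.range n, (1 - z * p ^ k)) *
        ∏ k ∈ Finset.range n, (1 - p / z * p ^ k)) := by
  induction n with
  | zero =>
    have h0 := hasSum_single (f := fun j : ℤ => fp p (2 * 0) * rp p ((0 : ℕ) + j) *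
      rp p ((0 : ℕ) - j) * tt p z j) 0 fun j hj => by
        rcases lt_or_gt_of_ne hj with h | h
        · simp [rp, not_le.2 h]
        · simp [rp, not_le.2 h]
    simpa [fp, rp, tt] using! h0
  | succ n ih =>
    -- expand `(1 - z pⁿ)(1 - pⁿ⁺¹/z) = (1 + p²ⁿ⁺¹) - z pⁿ - pⁿ⁺¹/z`; the last two terms shift `j`
    have e1 := (ih.mul_left (1 + p ^ (2 * n + 1)))
    have e2 := ((Equiv.addRight (-1 : ℤ)).hasSum_iff.2 ih).mul_left (-(z * p ^ n))
    have e3 := ((Equiv.addRight (1 : ℤ)).hasSum_iff.2 ih).mul_left (-(p ^ (n + 1) / z))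
    convert! (e1.add e2).add e3 using 1
    · funext j
      have s1 := tt_succ (z := z) hp hz (j - 1)
      have s2 := tt_succ (z := z) hp hz j
      rw [sub_add_cancel] at s1
      have r1 := rp_sub_one hp1 (n + 1 + j)
      have r2 := rp_sub_one hp1 (n + 1 + j - 1)
      have r3 := rp_sub_one hp1 (n + 1 - j)
      have r4 := rp_sub_one hp1 (n + 1 - j - 1)
      have hf : fp p (2 * (n + 1)) = fp p (2 * n) * (1 - p ^ (2 * n + 1)) * (1 - p ^ (2 * n + 2)) := by
        rw [Nat.mul_succ, fp, Finset.prod_range_succ, Finset.prod_range_succ, ← fp]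
        ring
      simp only [Function.comp, Equiv.coe_addRight, Nat.cast_add, Nat.cast_one]
      rw [show (n : ℤ) + j = n + 1 + j - 1 by ring, show (n : ℤ) - j = n + 1 - j - 1 by ring,
        show (n : ℤ) + (j + -1) = n + 1 + j - 1 - 1 by ring,
        show (n : ℤ) - (j + -1) = n + 1 - j by ring,
        show (n : ℤ) + (j + 1) = n + 1 + j by ring,
        show (n : ℤ) - (j + 1) = n + 1 - j - 1 - 1 by ring, r2, r1, r4, r3, s2, hf, ← sub_eq_add_neg,
        s1]
      have hpj := zpow_ne_zero j hp
      rw [zpow_sub_one₀ hp, zpow_sub_one₀ hp, zpow_sub_one₀ hp, zpow_sub₀ hp, zpow_add₀ hp,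
        zpow_add_one₀ hp, zpow_natCast]
      field_simp
      ring
    · rw [Finset.prod_range_succ, Finset.prod_range_succ]
      field_simp
      ring

lemma rp_tendsto {p : ℂ} (hp : ‖p‖ < 1) {u : ℕ → ℤ} (hu : Tendsto u atTop atTop) :
    Tendsto (fun n => rp p (u n)) atTop (𝓝 (qp p p)⁻¹) := by
  have h : Tendsto (fun n => (fp p n)⁻¹) atTop (𝓝 (qp p p)⁻¹) :=
    (qp_tendsto p hp).inv₀ (qp_ne_zero hp hp)
  have h2 : Tendsto (fun n => (u n).toNat) atTop atTop :=
    tendsto_atTop.2 fun b => (hu.eventually_ge_atTop (b : ℤ)).mono fun n hn => by omega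
  refine (h.comp h2).congr' ?_
  filter_upwards [hu.eventually_ge_atTop 0] with n hn
  simp [rp, hn]

/-- The Jacobi triple product identity, obtained from `finite_jtp` by dominated convergence. -/
lemma jtp {p z w : ℂ} (hp : p ≠ 0) (hp1 : ‖p‖ < 1) (hzw : z * w = p) :
    ∑' j : ℤ, tt p z j = qp z p * qp w p * qp p p := by
  have hz : z ≠ 0 := by rintro rfl; simp at hzw; exact hp hzw.symm
  obtain rfl : w = p / z := by field_simp; linear_combination hzw
  have hP := qp_ne_zero hp1 hp1
  obtain ⟨C, hC⟩ := rp_bounded hp1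
  have hF : Tendsto (fun n => fp p (2 * n)) atTop (𝓝 (qp p p)) :=
    (qp_tendsto p hp1).comp (tendsto_id.const_mul_atTop' two_pos)
  obtain ⟨B, hB⟩ := (Metric.isBounded_range_of_tendsto _ hF).exists_norm_le
  have hcast : Tendsto (fun n : ℕ => (n : ℤ)) atTop atTop := tendsto_natCast_atTop_atTop
  have hlim := tendsto_tsum_of_dominated_convergence
    (f := fun (n : ℕ) (j : ℤ) => fp p (2 * n) * rp p (n + j) * rp p (n - j) * tt p z j)
    (g := fun j : ℤ => qp p p * (qp p p)⁻¹ * (qp p p)⁻¹ * tt p z j)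
    (bound := fun j => B * C * C * ‖tt p z j‖) (𝓕 := atTop)
    ((tt_summable hp hz hp1).mul_left _)
    (fun j => ((hF.mul (rp_tendsto hp1 (tendsto_atTop_add_const_right _ j hcast))).mul
      (rp_tendsto hp1 (by
        simpa [sub_eq_add_neg] using tendsto_atTop_add_const_right _ (-j) hcast))).mul_const _)
    (.of_forall fun n j => by
      simp only [norm_mul]
      have hB0 := (norm_nonneg _).trans (hB _ ⟨n, rfl⟩)
      have hC0 := (norm_nonneg _).trans (hC 0)
      gcongr
      · exact hB _ ⟨n, rfl⟩
      · exact hC _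
      · exact hC _)
  have hlim2 := (qp_tendsto z hp1).mul (qp_tendsto (p / z) hp1)
  have key := tendsto_nhds_unique
    (hlim.congr fun n => (finite_jtp hp hz hp1 n).tsum_eq) hlim2
  rw [tsum_mul_left, mul_inv_cancel₀ hP, one_mul] at key
  rw [← key]
  field_simp

/-! ### Dissections of double theta series -/

/-- Splitting an absolutely convergent sum along a partition into `k` parametrized classes. -/
lemma tsum_split {X Y : Type*} {k : ℕ} (e : Fin k × X → Y) (he : e.Bijective) {f : Y → ℂ}
    (hf : Summable f) : ∑' y, f y = ∑ i, ∑' x, f (e (i, x)) := by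
  have h : Summable fun y => f (Equiv.ofBijective e he y) :=
    (Equiv.ofBijective e he).summable_iff.2 hf
  rw [← (Equiv.ofBijective e he).tsum_eq, h.tsum_prod, tsum_fintype]
  rfl

/-- The parametrization of `ℤ²` by the parity of the coordinate sum. -/
def parityMap : Fin 2 × ℤ × ℤ → ℤ × ℤ
  | (i, a, b) => (a + b + (i.val : ℤ), a - b)

lemma parityMap_bijective : parityMap.Bijective := by
  constructor
  · rintro ⟨i, a, b⟩ ⟨i', a', b'⟩ h
    simp only [parityMap, Prod.mk.injEq] at h
    simp only [Prod.mk.injEq, Fin.ext_iff]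
    omega
  · rintro ⟨m, n⟩
    refine ⟨(⟨((m + n) % 2).toNat, by omega⟩, (m + n) / 2, (m + n) / 2 - n), ?_⟩
    simp only [parityMap, Prod.mk.injEq]
    omega

/-- The parametrization of `ℤ² = ℤ[i]` by the cosets of the ideal `(2 + i)`, whose representatives
are `0` and the four units. -/
def gaussMap : Fin 5 × ℤ × ℤ → ℤ × ℤ
  | (i, m, n) => (2 * m + n + ![0, 1, 0, -1, 0] i, m - 2 * n + ![0, 0, 1, 0, -1] i)

lemma gaussMap_bijective : gaussMap.Bijective := by
  constructor
  · rintro ⟨i, a, b⟩ ⟨i', a', b'⟩ h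
    simp only [gaussMap, Prod.mk.injEq] at h
    fin_cases i <;> fin_cases i' <;> simp at h ⊢ <;> omega
  · rintro ⟨x, y⟩
    have h : (x - 2 * y) % 5 = 0 ∨ (x - 2 * y) % 5 = 1 ∨ (x - 2 * y) % 5 = 2 ∨
      (x - 2 * y) % 5 = 3 ∨ (x - 2 * y) % 5 = 4 := by omega
    rcases h with h | h | h | h | h
    · exact ⟨(0, (2 * x + y) / 5, (x - 2 * y) / 5), by simp [gaussMap]; omega⟩
    · exact ⟨(1, (2 * (x - 1) + y) / 5, (x - 1 - 2 * y) / 5), by simp [gaussMap]; omega⟩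
    · exact ⟨(4, (2 * x + (y + 1)) / 5, (x - 2 * (y + 1)) / 5), by simp [gaussMap]; omega⟩
    · exact ⟨(2, (2 * x + (y - 1)) / 5, (x - 2 * (y - 1)) / 5), by simp [gaussMap]; omega⟩
    · exact ⟨(3, (2 * (x + 1) + y) / 5, (x + 1 - 2 * y) / 5), by simp [gaussMap]; omega⟩

lemma tri_two (j : ℤ) : 2 * (j * (j - 1) / 2) = j * (j - 1) :=
  Int.mul_ediv_cancel' (Int.even_mul_pred_self j).two_dvd

lemma tri_add (a b : ℤ) : (a + b) * (a + b - 1) / 2 =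
    a * (a - 1) / 2 + b * (b - 1) / 2 + a * b := by
  have h1 := tri_two (a + b)
  have h2 := tri_two a
  have h3 := tri_two b
  refine mul_left_cancel₀ (two_ne_zero' ℤ) ?_
  linear_combination h1 - h2 - h3

lemma tri_sub (a b : ℤ) : (a - b) * (a - b - 1) / 2 =
    a * (a - 1) / 2 + b * (b - 1) / 2 + b - a * b := by
  have h1 := tri_two (a - b)
  have h2 := tri_two a
  have h3 := tri_two b
  refine mul_left_cancel₀ (two_ne_zero' ℤ) ?_
  linear_combination h1 - h2 - h3

lemma tt_pow {q : ℂ} (hq : q ≠ 0) (m i : ℕ) (j : ℤ) :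
    tt (q ^ m) (q ^ i) j = (-1) ^ j * q ^ (m * (j * (j - 1) / 2) + i * j) := by
  rw [tt, ← zpow_natCast q m, ← zpow_natCast q i, ← zpow_mul, ← zpow_mul, zpow_add₀ hq, mul_assoc]

lemma neg_one_zpow_sq (j : ℤ) : (-1 : ℂ) ^ j * (-1) ^ j = 1 := by
  rw [← mul_zpow]; norm_num

lemma neg_one_zpow_neg (j : ℤ) : (-1 : ℂ) ^ (-j) = (-1) ^ j := by
  rw [zpow_neg, ← inv_zpow]; norm_num

lemma tt_neg_pow {q : ℂ} (hq : q ≠ 0) (m i : ℕ) (j : ℤ) :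
    tt (q ^ m) (-q ^ i) j = q ^ (m * (j * (j - 1) / 2) + i * j) := by
  have h : (-q ^ i) ^ j = (-1) ^ j * (q ^ i) ^ j := by rw [← mul_zpow, neg_one_mul]
  have h2 := tt_pow hq m i j
  rw [tt] at h2 ⊢
  rw [h]
  linear_combination (-1) ^ j * h2 + q ^ (m * (j * (j - 1) / 2) + i * j) * neg_one_zpow_sq j

lemma tsum_mul_tt {p₁ z₁ p₂ z₂ : ℂ} (h₁ : p₁ ≠ 0) (h₁' : ‖p₁‖ < 1) (hz₁ : z₁ ≠ 0)
    (h₂ : p₂ ≠ 0) (h₂' : ‖p₂‖ < 1) (hz₂ : z₂ ≠ 0) :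
    Summable (fun x : ℤ × ℤ => tt p₁ z₁ x.1 * tt p₂ z₂ x.2) ∧
    (∑' j, tt p₁ z₁ j) * ∑' j, tt p₂ z₂ j = ∑' x : ℤ × ℤ, tt p₁ z₁ x.1 * tt p₂ z₂ x.2 :=
  ⟨summable_mul_of_summable_norm (tt_summable h₁ hz₁ h₁') (tt_summable h₂ hz₂ h₂'),
    tsum_mul_tsum_of_summable_norm (tt_summable h₁ hz₁ h₁') (tt_summable h₂ hz₂ h₂')⟩

/-- `f(q, q⁴) f(-q², -q³) = f(-q³, -q⁷) f(-q⁴, -q⁶) + q f(-q, -q⁹) f(-q², -q⁸)` in Ramanujan's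
notation: the double series is split by the parity of the sum of the two indices. -/
lemma schroeter_pos {q : ℂ} (hq : q ≠ 0) (hq1 : ‖q‖ < 1) :
    (∑' j, tt (q ^ 5) (-q ^ 1) j) * ∑' j, tt (q ^ 5) (q ^ 2) j =
      (∑' j, tt (q ^ 10) (q ^ 3) j) * (∑' j, tt (q ^ 10) (q ^ 4) j) +
      q * ((∑' j, tt (q ^ 10) (q ^ 8) j) * ∑' j, tt (q ^ 10) (q ^ 9) j) := by
  have n0 : ∀ i, q ^ i ≠ 0 := fun i => pow_ne_zero i hq
  have h5 := norm_pow_lt hq1 (show 5 ≠ 0 by norm_num)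
  have h10 := norm_pow_lt hq1 (show 10 ≠ 0 by norm_num)
  obtain ⟨hs, he⟩ := tsum_mul_tt (n0 5) h5 (neg_ne_zero.2 (n0 1)) (n0 5) h5 (n0 2)
  rw [he, tsum_split _ parityMap_bijective hs, Fin.sum_univ_two,
    (tsum_mul_tt (n0 10) h10 (n0 3) (n0 10) h10 (n0 4)).2,
    (tsum_mul_tt (n0 10) h10 (n0 8) (n0 10) h10 (n0 9)).2, ← tsum_mul_left]
  congr 1 <;> refine tsum_congr fun ⟨a, b⟩ => ?_
  · simp only [parityMap, tt_pow hq, tt_neg_pow hq, Fin.val_zero, Nat.cast_zero, add_zero,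
      tri_add a b, tri_sub a b]
    rw [sub_eq_add_neg a b, zpow_add₀ (neg_ne_zero.2 (one_ne_zero (α := ℂ))), neg_one_zpow_neg,
      mul_left_comm,
      ← zpow_add₀ hq, mul_mul_mul_comm, ← zpow_add₀ hq]
    congr 2
    push_cast
    ring
  · simp only [parityMap, tt_pow hq, tt_neg_pow hq, Fin.val_one, Nat.cast_one, tri_succ,
      tri_add a b, tri_sub a b]
    rw [sub_eq_add_neg a b, zpow_add₀ (neg_ne_zero.2 (one_ne_zero (α := ℂ))), neg_one_zpow_neg,
      mul_left_comm,
      ← zpow_add₀ hq, mul_mul_mul_comm, ← zpow_add₀ hq, mul_left_comm, ← zpow_one_add₀ hq]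
    congr 2
    push_cast
    ring

/-- `f(-q, -q⁴) f(q², q³) = f(-q³, -q⁷) f(-q⁴, -q⁶) - q f(-q, -q⁹) f(-q², -q⁸)` in Ramanujan's
notation. -/
lemma schroeter_neg {q : ℂ} (hq : q ≠ 0) (hq1 : ‖q‖ < 1) :
    (∑' j, tt (q ^ 5) (q ^ 1) j) * ∑' j, tt (q ^ 5) (-q ^ 2) j =
      (∑' j, tt (q ^ 10) (q ^ 3) j) * (∑' j, tt (q ^ 10) (q ^ 4) j) +
      -q * ((∑' j, tt (q ^ 10) (q ^ 8) j) * ∑' j, tt (q ^ 10) (q ^ 9) j) := by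
  have n0 : ∀ i, q ^ i ≠ 0 := fun i => pow_ne_zero i hq
  have h5 := norm_pow_lt hq1 (show 5 ≠ 0 by norm_num)
  have h10 := norm_pow_lt hq1 (show 10 ≠ 0 by norm_num)
  obtain ⟨hs, he⟩ := tsum_mul_tt (n0 5) h5 (n0 1) (n0 5) h5 (neg_ne_zero.2 (n0 2))
  rw [he, tsum_split _ parityMap_bijective hs, Fin.sum_univ_two,
    (tsum_mul_tt (n0 10) h10 (n0 3) (n0 10) h10 (n0 4)).2,
    (tsum_mul_tt (n0 10) h10 (n0 8) (n0 10) h10 (n0 9)).2, ← tsum_mul_left]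
  congr 1 <;> refine tsum_congr fun ⟨a, b⟩ => ?_
  · simp only [parityMap, tt_pow hq, tt_neg_pow hq, Fin.val_zero, Nat.cast_zero, add_zero,
      tri_add a b, tri_sub a b]
    rw [zpow_add₀ (by norm_num), mul_assoc, ← zpow_add₀ hq, mul_mul_mul_comm, ← zpow_add₀ hq]
    congr 2
    push_cast
    ring
  · simp only [parityMap, tt_pow hq, tt_neg_pow hq, Fin.val_one, Nat.cast_one, tri_succ,
      tri_add a b, tri_sub a b]
    rw [zpow_add_one₀ (by norm_num), zpow_add₀ (by norm_num), mul_assoc, ← zpow_add₀ hq,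
      mul_mul_mul_comm, ← zpow_add₀ hq, mul_neg_one, neg_mul, neg_mul, mul_left_comm q,
      ← zpow_one_add₀ hq]
    congr 3
    push_cast
    ring

lemma tt_sq {q : ℂ} (hq : q ≠ 0) (j : ℤ) : tt (q ^ 2) (q ^ 1) j = (-1) ^ j * q ^ (j * j) := by
  rw [tt_pow hq]
  congr 2
  have := tri_two j
  push_cast
  linear_combination this

lemma tt_ten {q : ℂ} (hq : q ≠ 0) (i : ℕ) (j : ℤ) :
    tt (q ^ 10) (q ^ i) j = (-1) ^ j * q ^ (5 * (j * j) + (i - 5) * j) := by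
  rw [tt_pow hq]
  congr 2
  have := tri_two j
  push_cast
  linear_combination 5 * this

lemma sign_gauss (m n : ℤ) : (-1 : ℂ) ^ (2 * m + n) * (-1) ^ (m - 2 * n) = (-1) ^ m * (-1) ^ n := by
  rw [← zpow_add₀ (by norm_num), ← zpow_add₀ (by norm_num),
    show 2 * m + n + (m - 2 * n) = 2 * (m - n) + (m + n) by ring, zpow_add₀ (by norm_num), zpow_mul]
  norm_num

/-- `φ(-q)² - φ(-q⁵)² = -4 q f(-q, -q⁹) f(-q³, -q⁷)`: the sum over the Gaussian integers is split
along the cosets of `(2 + i)`; the unit cosets contribute equally. -/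
lemma phi_sq_sub {q : ℂ} (hq : q ≠ 0) (hq1 : ‖q‖ < 1) :
    (∑' j, tt (q ^ 2) (q ^ 1) j) * ∑' j, tt (q ^ 2) (q ^ 1) j =
      (∑' j, tt (q ^ 10) (q ^ 5) j) * (∑' j, tt (q ^ 10) (q ^ 5) j) +
      -q * ((∑' j, tt (q ^ 10) (q ^ 9) j) * ∑' j, tt (q ^ 10) (q ^ 7) j) +
      -q * ((∑' j, tt (q ^ 10) (q ^ 7) j) * ∑' j, tt (q ^ 10) (q ^ 1) j) +
      -q * ((∑' j, tt (q ^ 10) (q ^ 1) j) * ∑' j, tt (q ^ 10) (q ^ 3) j) +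
      -q * ((∑' j, tt (q ^ 10) (q ^ 3) j) * ∑' j, tt (q ^ 10) (q ^ 9) j) := by
  have n0 : ∀ i, q ^ i ≠ 0 := fun i => pow_ne_zero i hq
  have h2 := norm_pow_lt hq1 (show 2 ≠ 0 by norm_num)
  have h10 := norm_pow_lt hq1 (show 10 ≠ 0 by norm_num)
  obtain ⟨hs, he⟩ := tsum_mul_tt (n0 2) h2 (n0 1) (n0 2) h2 (n0 1)
  have hm := fun i j => (tsum_mul_tt (n0 10) h10 (n0 i) (n0 10) h10 (n0 j)).2
  rw [he, tsum_split _ gaussMap_bijective hs, Fin.sum_univ_five, hm, hm, hm, hm, hm]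
  simp only [← tsum_mul_left]
  have one : ((-1 : ℂ)) ≠ 0 := by norm_num
  congr 1
  congr 1
  congr 1
  congr 1
  all_goals
    refine tsum_congr fun ⟨m, n⟩ => ?_
    have hs := sign_gauss m n
    simp only [gaussMap, tt_sq hq, tt_ten hq, Matrix.cons_val, add_zero, zpow_add₀ one (_ + _) (-1),
      zpow_add₀ one (_ - _) (-1), zpow_add₀ one (_ + _) 1, zpow_add₀ one (_ - _) 1, zpow_one,
      zpow_neg_one, inv_neg_one]
  · rw [mul_mul_mul_comm, hs, ← zpow_add₀ hq, mul_mul_mul_comm, ← zpow_add₀ hq]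
    congr 2
    push_cast
    ring
  all_goals
    rw [mul_mul_mul_comm, ← zpow_add₀ hq, mul_mul_mul_comm ((-1) ^ m), ← zpow_add₀ hq]
    simp only [mul_neg, neg_mul, mul_one, hs]
    rw [mul_left_comm q, ← zpow_one_add₀ hq]
    congr 3
    push_cast
    ring

/-! ### The modular identity -/

theorem stmt12 (q : ℂ) (hq : ‖q‖ < 1) :
    HH q ^ 4 * GG (q ^ 2) ^ 2 - GG q ^ 4 * HH (q ^ 2) ^ 2 +
        GG q ^ 2 * HH q ^ 2 * GG (q ^ 2) * HH (q ^ 2) =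
      GG (q ^ 2) ^ 3 * HH (q ^ 2) ^ 3 / (GG q ^ 2 * HH q ^ 2) := by
  rcases eq_or_ne q 0 with rfl | hq0
  · simp [GG, HH, qp]
  have n0 : ∀ i, q ^ i ≠ 0 := fun i => pow_ne_zero i hq0
  -- every product is expressed through `t i = (q^i; q^10)_∞` for `1 ≤ i ≤ 10`
  set t : ℕ → ℂ := fun i => qp (q ^ i) (q ^ 10) with ht
  have ht0 : ∀ i, i ≠ 0 → t i ≠ 0 := fun i hi =>
    qp_ne_zero (norm_pow_lt hq hi) (norm_pow_lt hq (by norm_num))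
  have h2 : ∀ i, qp (q ^ i) (q ^ 2) = t i * t (i + 2) * t (i + 4) * t (i + 6) * t (i + 8) := by
    intro i
    rw [qp_dissect _ (norm_pow_lt hq two_ne_zero) (show 5 ≠ 0 by norm_num)]
    simp only [Finset.prod_range_succ, Finset.prod_range_zero, ht, ← pow_mul, ← pow_add]
    norm_num
  have h5 : ∀ i, qp (q ^ i) (q ^ 5) = t i * t (i + 5) := by
    intro i
    rw [qp_dissect _ (norm_pow_lt hq (by norm_num)) two_ne_zero]
    simp only [Finset.prod_range_succ, Finset.prod_range_zero, ht, ← pow_mul, ← pow_add]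
    norm_num
  have h5n : ∀ i, t i * t (i + 5) * qp (-q ^ i) (q ^ 5) = t (i * 2) := by
    intro i
    rw [← h5, qp_mul_qp_neg _ (norm_pow_lt hq (by norm_num)), ← pow_mul, ← pow_mul]
  have J : ∀ m i j, i + j = m → m ≠ 0 → ∑' k : ℤ, tt (q ^ m) (q ^ i) k =
      qp (q ^ i) (q ^ m) * qp (q ^ j) (q ^ m) * qp (q ^ m) (q ^ m) := fun m i j h hm =>
    jtp (n0 m) (norm_pow_lt hq hm) (by rw [← pow_add, h])
  have Jn : ∀ m i j, i + j = m → m ≠ 0 → ∑' k : ℤ, tt (q ^ m) (-q ^ i) k =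
      qp (-q ^ i) (q ^ m) * qp (-q ^ j) (q ^ m) * qp (q ^ m) (q ^ m) := fun m i j h hm =>
    jtp (n0 m) (norm_pow_lt hq hm) (by rw [neg_mul_neg, ← pow_add, h])
  have J10 : ∀ i j, i + j = 10 → ∑' k : ℤ, tt (q ^ 10) (q ^ i) k = t i * t j * t 10 :=
    fun i j h => J 10 i j h (by norm_num)
  have G1 : GG q = 1 / (t 1 * t 6 * (t 4 * t 9)) := by
    have a := h5 1
    rw [pow_one] at a
    rw [GG, a, h5 4]
  have H1 : HH q = 1 / (t 2 * t 7 * (t 3 * t 8)) := by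
    rw [HH, h5 2, h5 3]
  have G2 : GG (q ^ 2) = 1 / (t 2 * t 8) := by
    simp only [GG, ← pow_mul, ht]
  have H2 : HH (q ^ 2) = 1 / (t 4 * t 6) := by
    simp only [HH, ← pow_mul, ht]
  have S1 := schroeter_pos hq0 hq
  rw [Jn 5 1 4 rfl (by norm_num), J 5 2 3 rfl (by norm_num), J10 3 7 rfl, J10 4 6 rfl,
    J10 8 2 rfl, J10 9 1 rfl, h5 2, h5 3, h5 5] at S1
  have S2 := schroeter_neg hq0 hq
  rw [Jn 5 2 3 rfl (by norm_num), J 5 1 4 rfl (by norm_num), J10 3 7 rfl, J10 4 6 rfl,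
    J10 8 2 rfl, J10 9 1 rfl, h5 1, h5 4, h5 5] at S2
  have S3 := phi_sq_sub hq0 hq
  rw [J 2 1 1 rfl (by norm_num), J10 5 5 rfl, J10 9 1 rfl, J10 7 3 rfl, J10 1 9 rfl, J10 3 7 rfl,
    h2 1, h2 2] at S3
  have m1 := h5n 1
  have m2 := h5n 2
  have m3 := h5n 3
  have m4 := h5n 4
  norm_num at S1 S2 S3 m1 m2 m3 m4
  have p1 := ht0 1 (by norm_num)
  have p2 := ht0 2 (by norm_num)
  have p3 := ht0 3 (by norm_num)
  have p4 := ht0 4 (by norm_num)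
  have p5 := ht0 5 (by norm_num)
  have p6 := ht0 6 (by norm_num)
  have p7 := ht0 7 (by norm_num)
  have p8 := ht0 8 (by norm_num)
  have p9 := ht0 9 (by norm_num)
  have p10 := ht0 10 (by norm_num)
  rw [G1, H1, G2, H2]
  -- `a i` is the theta quotient `(q^i, q^(10-i); q^10)_∞`
  obtain ⟨a1, e1⟩ : ∃ a, a = t 1 * t 9 := ⟨_, rfl⟩
  obtain ⟨a2, e2⟩ : ∃ a, a = t 2 * t 8 := ⟨_, rfl⟩
  obtain ⟨a3, e3⟩ : ∃ a, a = t 3 * t 7 := ⟨_, rfl⟩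
  obtain ⟨a4, e4⟩ : ∃ a, a = t 4 * t 6 := ⟨_, rfl⟩
  have q1 : a1 ≠ 0 := e1 ▸ mul_ne_zero p1 p9
  have q2 : a2 ≠ 0 := e2 ▸ mul_ne_zero p2 p8
  have q3 : a3 ≠ 0 := e3 ▸ mul_ne_zero p3 p7
  have q4 : a4 ≠ 0 := e4 ▸ mul_ne_zero p4 p6
  have R1 : t 5 ^ 2 * a2 ^ 2 * a3 = a1 * a4 * (a3 * a4 + q * a1 * a2) := by
    refine mul_left_cancel₀ (pow_ne_zero 2 p10) ?_
    have k : a1 * a4 * (qp (-q) (q ^ 5) * qp (-q ^ 4) (q ^ 5)) = a2 := by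
      rw [e1, e2, e4, ← m1, ← m4]; ring
    rw [show t 2 * t 7 * (t 3 * t 8) = a2 * a3 by rw [e2, e3]; ring, ← e3, ← e4,
      show t 8 * t 2 = a2 by rw [e2]; ring, show t 9 * t 1 = a1 by rw [e1]; ring] at S1
    linear_combination a1 * a4 * S1 - t 5 ^ 2 * t 10 ^ 2 * a2 * a3 * k
  have R2 : t 5 ^ 2 * a1 * a4 ^ 2 = a2 * a3 * (a3 * a4 - q * a1 * a2) := by
    refine mul_left_cancel₀ (pow_ne_zero 2 p10) ?_
    have k : a2 * a3 * (qp (-q ^ 2) (q ^ 5) * qp (-q ^ 3) (q ^ 5)) = a4 := by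
      rw [e2, e3, e4, ← m2, ← m3]; ring
    rw [show t 1 * t 6 * (t 4 * t 9) = a1 * a4 by rw [e1, e4]; ring, ← e3, ← e4,
      show t 8 * t 2 = a2 by rw [e2]; ring, show t 9 * t 1 = a1 by rw [e1]; ring] at S2
    linear_combination a2 * a3 * S2 - t 5 ^ 2 * t 10 ^ 2 * a1 * a4 * k
  have R3 : a1 ^ 4 * a3 ^ 4 * t 5 ^ 4 * a2 ^ 2 * a4 ^ 2 = t 5 ^ 4 - 4 * q * a1 * a3 := by
    refine mul_left_cancel₀ (pow_ne_zero 2 p10) ?_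
    rw [e1, e2, e3, e4]
    linear_combination S3
  rw [show t 1 * t 6 * (t 4 * t 9) = a1 * a4 by rw [e1, e4]; ring,
    show t 2 * t 7 * (t 3 * t 8) = a2 * a3 by rw [e2, e3]; ring, ← e2, ← e4]
  have F : a1 ^ 4 * a4 ^ 6 - a2 ^ 6 * a3 ^ 4 + a1 ^ 2 * a4 ^ 3 * a2 ^ 3 * a3 ^ 2 =
      a1 ^ 6 * a3 ^ 6 * a2 ^ 5 * a4 ^ 5 := by
    -- `R1` and `R2` factor `a2³ a3²` and `a1² a4³` up to the factor `t 5 ^ 2`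
    have X1 : t 5 ^ 2 * (a2 ^ 3 * a3 ^ 2) = a1 * a2 * a3 * a4 * (a3 * a4 + q * a1 * a2) := by
      linear_combination a2 * a3 * R1
    have X2 : t 5 ^ 2 * (a1 ^ 2 * a4 ^ 3) = a1 * a2 * a3 * a4 * (a3 * a4 - q * a1 * a2) := by
      linear_combination a1 * a4 * R2
    have Y1 := congrArg (· ^ 2) X1
    have Y2 := congrArg (· ^ 2) X2
    refine mul_left_cancel₀ (pow_ne_zero 4 p5) ?_
    linear_combination Y2 - Y1 - a1 ^ 2 * a4 ^ 3 * a2 ^ 3 * a3 ^ 2 * R3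
  field_simp
  linear_combination F
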